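/- Let b and b' be elements of ℤ², both of type 0 (b₁ ≠ 0, b₂ ≠ 0, b₀ := b₁ − kb₂ ≠ 0, and likewise for b'). Say that an element b of type 0 is of subtype α if τb₂ ≠ σb₁ and τb₂ + σb₀ ≠ 0; of subtype β if exactly one of the equalities τb₂ = σb₁, τb₂ + σb₀ = 0 holds; and of subtype γ if both hold. If b and b' belong to different subtypes, then f_b ≠ f_{b'}, i.e. there exists a real u with f_b(u) ≠ f_{b'}(u). -/

import Mathlib

noncomputable section

/-- `λ = τ - kσ`, the area parameter of the second section of the Hirzebruch surface. -/
def lamH (k : ℤ) (σ τ : ℝ) : ℝ := τ - (k : ℝ) * σ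

/-- First coordinate of the centroid of the moment trapezoid with vertices
`(0,0), (σ,0), (0,τ), (σ,λ)`. -/
def c₁H (k : ℤ) (σ τ : ℝ) : ℝ := σ * (τ + 2 * lamH k σ τ) / (3 * (τ + lamH k σ τ))

/-- Second coordinate of the centroid of the moment trapezoid. -/
def c₂H (k : ℤ) (σ τ : ℝ) : ℝ :=
  (τ ^ 2 + τ * lamH k σ τ + lamH k σ τ ^ 2) / (3 * (τ + lamH k σ τ))

/-- `q_b = c₁ b₁ + c₂ b₂`. -/
def qH (k : ℤ) (σ τ : ℝ) (b₁ b₂ : ℤ) : ℝ :=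
  c₁H k σ τ * (b₁ : ℝ) + c₂H k σ τ * (b₂ : ℝ)

/-- `f_b(u) = u² S_{ψ_b}(u)` for `b = (b₁,b₂)` of type 0 on the Hirzebruch surface. -/
def fH (k : ℤ) (σ τ : ℝ) (b₁ b₂ : ℤ) (u : ℝ) : ℝ :=
  Real.exp (qH k σ τ b₁ b₂ * u) *
    (1 / ((b₁ : ℝ) * (b₂ : ℝ))
      - Real.exp (-(τ * (b₂ : ℝ) * u)) / (((b₁ : ℝ) - (k : ℝ) * (b₂ : ℝ)) * (b₂ : ℝ))
      - Real.exp (-(σ * (b₁ : ℝ) * u)) / ((b₁ : ℝ) * (b₂ : ℝ))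
      + Real.exp (-((τ * (b₂ : ℝ) + σ * ((b₁ : ℝ) - (k : ℝ) * (b₂ : ℝ))) * u)) /
          (((b₁ : ℝ) - (k : ℝ) * (b₂ : ℝ)) * (b₂ : ℝ)))

/-- `b = (b₁,b₂)` is of type 0: `b₁ ≠ 0`, `b₂ ≠ 0` and `b₀ = b₁ - k b₂ ≠ 0`. -/
def IsType0 (k b₁ b₂ : ℤ) : Prop := b₁ ≠ 0 ∧ b₂ ≠ 0 ∧ b₁ - k * b₂ ≠ 0

end

/-- Subtype (0)α: the four exponents `q, q - τb₂, q - σb₁, q - τb₂ - σb₀` are pairwise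
distinct. -/
def SubtypeAlpha (k : ℤ) (σ τ : ℝ) (b₁ b₂ : ℤ) : Prop :=
  τ * (b₂ : ℝ) ≠ σ * (b₁ : ℝ) ∧
    τ * (b₂ : ℝ) + σ * ((b₁ : ℝ) - (k : ℝ) * (b₂ : ℝ)) ≠ 0

/-- Subtype (0)β: exactly one of the two equalities holds. -/
def SubtypeBeta (k : ℤ) (σ τ : ℝ) (b₁ b₂ : ℤ) : Prop :=
  (τ * (b₂ : ℝ) = σ * (b₁ : ℝ) ∧
      τ * (b₂ : ℝ) + σ * ((b₁ : ℝ) - (k : ℝ) * (b₂ : ℝ)) ≠ 0) ∨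
  (τ * (b₂ : ℝ) ≠ σ * (b₁ : ℝ) ∧
      τ * (b₂ : ℝ) + σ * ((b₁ : ℝ) - (k : ℝ) * (b₂ : ℝ)) = 0)

/-- Subtype (0)γ: both equalities hold. -/
def SubtypeGamma (k : ℤ) (σ τ : ℝ) (b₁ b₂ : ℤ) : Prop :=
  τ * (b₂ : ℝ) = σ * (b₁ : ℝ) ∧
    τ * (b₂ : ℝ) + σ * ((b₁ : ℝ) - (k : ℝ) * (b₂ : ℝ)) = 0

/-! Exponentials with distinct rates are linearly independent, so `f_b`, a combination of four
exponentials with nonzero coefficients, determines whether its four exponents are pairwise distinct: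
if they are, a function with a repeated exponent has too few terms to equal it. For type 0, distinct
exponents mean subtype α. Subtype γ is empty, since its two equalities combine to
`(τ + λ) b₂ = 0`, so it is enough to tell α from β. -/

open Function

section LinearIndependent

variable {ι κ X R M : Type*} [Fintype ι] [Fintype κ] [Semiring R] [AddCommMonoid M] [Module R M]
  {v : X → M}

theorem range_subset_range_of_sum_smul_eq (hv : LinearIndependent R v) {x : ι → X} {y : κ → X}
    {a : ι → R} {c : κ → R} (hx : Injective x) (ha : ∀ i, a i ≠ 0)
    (h : ∑ i, a i • v (x i) = ∑ j, c j • v (y j)) : Set.range x ⊆ Set.range y := by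
  have hcoeff : (Finsupp.equivFunOnFinite.symm a).mapDomain x =
      (Finsupp.equivFunOnFinite.symm c).mapDomain y := by
    apply hv
    rw [Finsupp.linearCombination_mapDomain, Finsupp.linearCombination_mapDomain]
    simpa [Finsupp.linearCombination_apply, Finsupp.sum_fintype] using h
  rintro _ ⟨i, rfl⟩
  by_contra hi
  apply ha i
  calc a i = (Finsupp.equivFunOnFinite.symm a).mapDomain x (x i) := by
        simp [Finsupp.mapDomain_apply hx]
    _ = 0 := by rw [hcoeff, Finsupp.mapDomain_of_notMem_range _ _ hi]

theorem injective_of_sum_smul_eq (hv : LinearIndependent R v) {x y : ι → X} {a c : ι → R}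
    (hx : Injective x) (ha : ∀ i, a i ≠ 0) (h : ∑ i, a i • v (x i) = ∑ i, c i • v (y i)) :
    Injective y := by
  obtain ⟨g, rfl⟩ : ∃ g : ι → ι, x = y ∘ g :=
    Set.range_subset_range_iff_exists_comp.mp (range_subset_range_of_sum_smul_eq hv hx ha h)
  exact hx.of_comp_right (Finite.surjective_of_injective hx.of_comp)

end LinearIndependent

theorem linearIndependent_exp_mul :
    LinearIndependent ℝ (fun r u : ℝ => Real.exp (r * u)) := by
  let expHom (r : ℝ) : Multiplicative ℝ →* ℝ :=
    { toFun := fun u => Real.exp (r * u.toAdd)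
      map_one' := by simp
      map_mul' := fun u v => by simp [mul_add, Real.exp_add] }
  have expHom_injective : Injective expHom := fun r s hrs => by
    simpa [expHom] using DFunLike.congr_fun hrs (Multiplicative.ofAdd 1)
  exact (linearIndependent_monoidHom (Multiplicative ℝ) ℝ).comp expHom expHom_injective

/-- The exponents of `f_b`: the values at the vertices `(0,0), (0,τ), (σ,0), (σ,λ)` of the moment
trapezoid, in this order, of the Hamiltonian `p ↦ q_b - ⟨b, p⟩`. -/
noncomputable def vertexExponent (k : ℤ) (σ τ : ℝ) (b₁ b₂ : ℤ) : Fin 4 → ℝ :=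
  ![qH k σ τ b₁ b₂, qH k σ τ b₁ b₂ - τ * b₂, qH k σ τ b₁ b₂ - σ * b₁,
    qH k σ τ b₁ b₂ - (τ * b₂ + σ * (b₁ - k * b₂))]

/-- The coefficients of `f_b`: the reciprocals of the products of the two isotropy weights at the
fixed points, in the order of the vertices used for `vertexExponent`. -/
noncomputable def vertexCoeff (k b₁ b₂ : ℤ) : Fin 4 → ℝ :=
  ![1 / (b₁ * b₂), -(1 / ((b₁ - k * b₂) * b₂)), -(1 / (b₁ * b₂)), 1 / ((b₁ - k * b₂) * b₂)]

theorem fH_eq_sum_exp (k : ℤ) (σ τ : ℝ) (b₁ b₂ : ℤ) :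
    fH k σ τ b₁ b₂ = ∑ i, vertexCoeff k b₁ b₂ i •
      fun u : ℝ => Real.exp (vertexExponent k σ τ b₁ b₂ i * u) := by
  funext u
  simp only [fH, vertexCoeff, vertexExponent, Fin.sum_univ_four, Pi.add_apply, Pi.smul_apply,
    smul_eq_mul, Matrix.cons_val, sub_mul _ _ u, sub_eq_add_neg _ (_ * u), Real.exp_add]
  ring

section Hirzebruch

variable {k : ℤ} {σ τ : ℝ} {b₁ b₂ : ℤ}

theorem IsType0.vertexCoeff_ne_zero (hb : IsType0 k b₁ b₂) (i : Fin 4) :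
    vertexCoeff k b₁ b₂ i ≠ 0 := by
  obtain ⟨hb₁, hb₂, hb₀⟩ := hb
  have hb₀' : (b₁ - k * b₂ : ℝ) ≠ 0 := mod_cast hb₀
  fin_cases i <;> simp [vertexCoeff, hb₁, hb₂, hb₀']

theorem IsType0.vertexExponent_injective_iff (hb : IsType0 k b₁ b₂) (hσ : σ ≠ 0) (hτ : τ ≠ 0)
    (hlam : lamH k σ τ ≠ 0) :
    Injective (vertexExponent k σ τ b₁ b₂) ↔ SubtypeAlpha k σ τ b₁ b₂ := by
  obtain ⟨hb₁, hb₂, hb₀⟩ := hb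
  have hb₀' : (b₁ - k * b₂ : ℝ) ≠ 0 := mod_cast hb₀
  have h₂₃ : σ * b₁ ≠ τ * b₂ + σ * (b₁ - k * b₂) := by
    intro h
    have hprod : lamH k σ τ * b₂ = 0 := by unfold lamH; linarith
    exact mul_ne_zero hlam (mod_cast hb₂) hprod
  rw [← List.nodup_ofFn]
  simp [vertexExponent, SubtypeAlpha, eq_comm (a := qH k σ τ b₁ b₂), h₂₃, hσ, hτ, hb₁, hb₂, hb₀',
    and_comm]

theorem IsType0.not_subtypeGamma (hb : IsType0 k b₁ b₂) (hτlam : τ + lamH k σ τ ≠ 0) :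
    ¬ SubtypeGamma k σ τ b₁ b₂ := by
  rintro ⟨h₁₂, h₀₃⟩
  have hsum : (τ + lamH k σ τ) * b₂ = 0 := by unfold lamH; linarith
  exact mul_ne_zero hτlam (mod_cast hb.2.1) hsum

theorem IsType0.subtypeBeta_iff_not_subtypeAlpha (hb : IsType0 k b₁ b₂)
    (hτlam : τ + lamH k σ τ ≠ 0) : SubtypeBeta k σ τ b₁ b₂ ↔ ¬ SubtypeAlpha k σ τ b₁ b₂ := by
  have hγ := hb.not_subtypeGamma hτlam
  unfold SubtypeAlpha SubtypeBeta SubtypeGamma at *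
  tauto

theorem IsType0.subtypeAlpha_of_fH_eq {b₁' b₂' : ℤ} (hb : IsType0 k b₁ b₂)
    (hb' : IsType0 k b₁' b₂') (hσ : σ ≠ 0) (hτ : τ ≠ 0) (hlam : lamH k σ τ ≠ 0)
    (hf : fH k σ τ b₁ b₂ = fH k σ τ b₁' b₂') (hα : SubtypeAlpha k σ τ b₁ b₂) :
    SubtypeAlpha k σ τ b₁' b₂' := by
  rw [fH_eq_sum_exp, fH_eq_sum_exp] at hf
  rw [← hb.vertexExponent_injective_iff hσ hτ hlam] at hα
  rw [← hb'.vertexExponent_injective_iff hσ hτ hlam]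
  exact injective_of_sum_smul_eq linearIndependent_exp_mul hα hb.vertexCoeff_ne_zero hf

end Hirzebruch

/-- Proposition 3.5 (Propsubtype1) of the paper: two type-0 elements of `ℤ²` belonging to
different subtypes have different functions `f_b = u² S_{ψ_b}`. -/
theorem hirzebruch_type0_different_subtype
    (k : ℤ) (hk : k ≠ 0) (σ τ : ℝ) (hσ : 0 < σ) (hτ : 0 < τ) (hlam : 0 < lamH k σ τ)
    (b₁ b₂ b₁' b₂' : ℤ) (hb : IsType0 k b₁ b₂) (hb' : IsType0 k b₁' b₂')
    (hdiff : ¬ ((SubtypeAlpha k σ τ b₁ b₂ ∧ SubtypeAlpha k σ τ b₁' b₂') ∨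
        (SubtypeBeta k σ τ b₁ b₂ ∧ SubtypeBeta k σ τ b₁' b₂') ∨
        (SubtypeGamma k σ τ b₁ b₂ ∧ SubtypeGamma k σ τ b₁' b₂'))) :
    ∃ u : ℝ, fH k σ τ b₁ b₂ u ≠ fH k σ τ b₁' b₂' u := by
  by_contra! hall
  have hf : fH k σ τ b₁ b₂ = fH k σ τ b₁' b₂' := funext hall
  have hα : SubtypeAlpha k σ τ b₁ b₂ ↔ SubtypeAlpha k σ τ b₁' b₂' :=
    ⟨hb.subtypeAlpha_of_fH_eq hb' hσ.ne' hτ.ne' hlam.ne' hf,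
      hb'.subtypeAlpha_of_fH_eq hb hσ.ne' hτ.ne' hlam.ne' hf.symm⟩
  have hβ := hb.subtypeBeta_iff_not_subtypeAlpha (add_pos hτ hlam).ne'
  have hβ' := hb'.subtypeBeta_iff_not_subtypeAlpha (add_pos hτ hlam).ne'
  tauto
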